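/- arXiv:1507.00124 — 6 statements merged into one kernel-verified Lean document; each statement's English description precedes it below -/
import Mathlib

section
/- No involutive Lie algebra automorphism σ (σ ∘ σ = id) of the product Lie algebra sl₂(ℝ) × so₃(ℝ) has a fixed-point subalgebra {x : σ(x) = x} of dimension 3 over ℝ. -/
open Matrix

/-- The componentwise Lie bracket on a product of Lie rings. -/
instance prodLieRing (L M : Type*) [LieRing L] [LieRing M] : LieRing (L × M) where
  bracket p q := (⁅p.1, q.1⁆, ⁅p.2, q.2⁆)
  add_lie x y z := by
    show (⁅x.1 + y.1, z.1⁆, ⁅x.2 + y.2, z.2⁆)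
      = (⁅x.1, z.1⁆, ⁅x.2, z.2⁆) + (⁅y.1, z.1⁆, ⁅y.2, z.2⁆)
    simp [add_lie, Prod.ext_iff]
  lie_add x y z := by
    show (⁅x.1, y.1 + z.1⁆, ⁅x.2, y.2 + z.2⁆)
      = (⁅x.1, y.1⁆, ⁅x.2, y.2⁆) + (⁅x.1, z.1⁆, ⁅x.2, z.2⁆)
    simp [lie_add, Prod.ext_iff]
  lie_self x := by
    show (⁅x.1, x.1⁆, ⁅x.2, x.2⁆) = (0 : L × M)
    simp [Prod.ext_iff]
  leibniz_lie x y z := by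
    show (⁅x.1, ⁅y.1, z.1⁆⁆, ⁅x.2, ⁅y.2, z.2⁆⁆)
      = (⁅⁅x.1, y.1⁆, z.1⁆, ⁅⁅x.2, y.2⁆, z.2⁆) + (⁅y.1, ⁅x.1, z.1⁆⁆, ⁅y.2, ⁅x.2, z.2⁆⁆)
    simp [Prod.ext_iff]

/-- The product of two Lie algebras, with the componentwise bracket. -/
instance prodLieAlgebra (R L M : Type*) [CommRing R] [LieRing L] [LieRing M]
    [LieAlgebra R L] [LieAlgebra R M] : LieAlgebra R (L × M) where
  lie_smul t x y := by
    show (⁅x.1, t • y.1⁆, ⁅x.2, t • y.2⁆) = t • (⁅x.1, y.1⁆, ⁅x.2, y.2⁆)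
    simp [Prod.ext_iff]

attribute [local instance 100] LieRing.ofAssociativeRing

/-- `sl₂(ℝ)`, the Lie algebra of traceless real 2×2 matrices. -/
abbrev sl2R : LieSubalgebra ℝ (Matrix (Fin 2) (Fin 2) ℝ) :=
  LieAlgebra.SpecialLinear.sl (Fin 2) ℝ


/-- `so₃(ℝ)`, the Lie algebra of skew-symmetric real 3×3 matrices. -/
abbrev so3R : LieSubalgebra ℝ (Matrix (Fin 3) (Fin 3) ℝ) :=
  LieAlgebra.Orthogonal.so (Fin 3) ℝ

theorem mat3_aux (M : Matrix (Fin 3) (Fin 3) ℝ) (p : Fin 3 → ℝ)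
    (h0 : p 0 ≠ 0) (h1 : p 1 ≠ 0) (h2 : p 2 ≠ 0) (hM : M * M = 1)
    (hc : ∀ i j, M.adjugate j i * p i = p j * M i j) :
    M.trace = -1 ∨ M.trace = 3 := by
  have hadj : M.adjugate = M.det • M := by
    calc M.adjugate = M.adjugate * (M * M) := by rw [hM, mul_one]
      _ = (M.adjugate * M) * M := by rw [Matrix.mul_assoc]
      _ = M.det • M := by rw [Matrix.adjugate_mul]; simp
  have hd : M.det * M.det = 1 := by rw [← Matrix.det_mul, hM, Matrix.det_one]
  have hdet1 : M.det = 1 := by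
    rcases mul_self_eq_one_iff.mp hd with h | h
    · exact h
    · exfalso
      have hs : ∀ i j, -(M j i * p i) = p j * M i j := by
        intro i j
        have := hc i j
        rw [hadj, h] at this
        simpa using this
      have e00 : M 0 0 = 0 := by
        have := hs 0 0
        have h3 : M 0 0 * p 0 = 0 := by linarith
        simpa [h0] using h3
      have e11 : M 1 1 = 0 := by
        have := hs 1 1
        have h3 : M 1 1 * p 1 = 0 := by linarith
        simpa [h1] using h3
      have e22 : M 2 2 = 0 := by
        have := hs 2 2
        have h3 : M 2 2 * p 2 = 0 := by linarith
        simpa [h2] using h3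
      have a := hs 0 1
      have b := hs 1 2
      have c := hs 2 0
      rw [Matrix.det_fin_three, e00, e11, e22] at h
      have k : (M 0 1 * M 1 2 * M 2 0 + M 0 2 * M 1 0 * M 2 1) * (p 0 * p 1 * p 2) = 0 := by
        have a' : M 1 0 * p 0 = -(p 1 * M 0 1) := by linarith
        have b' : M 2 1 * p 1 = -(p 2 * M 1 2) := by linarith
        have c' : M 0 2 * p 2 = -(p 0 * M 2 0) := by linarith
        have : M 0 2 * M 1 0 * M 2 1 * (p 0 * p 1 * p 2)
          = (M 0 2 * p 2) * (M 1 0 * p 0) * (M 2 1 * p 1) := by ring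
        rw [add_mul, this, a', b', c']; ring
      have h3 : M 0 1 * M 1 2 * M 2 0 + M 0 2 * M 1 0 * M 2 1 = 0 := by
        simpa [h0, h1, h2] using k
      linarith
  rw [hdet1, one_smul] at hadj
  have hh : ∀ i j, M.adjugate i j = M i j := fun i j => by rw [hadj]
  have hm : ∀ i j, (M * M) i j = (1 : Matrix (Fin 3) (Fin 3) ℝ) i j := fun i j => by rw [hM]
  rw [Matrix.adjugate_fin_three] at hadj
  have g00 := congrFun (congrFun hadj 0) 0
  have g11 := congrFun (congrFun hadj 1) 1
  have g22 := congrFun (congrFun hadj 2) 2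
  have m00 := hm 0 0
  have m11 := hm 1 1
  have m22 := hm 2 2
  simp [Matrix.mul_apply, Fin.sum_univ_three] at g00 g11 g22 m00 m11 m22
  rw [Matrix.trace_fin_three]
  have : (M 0 0 + M 1 1 + M 2 2 + 1) * (M 0 0 + M 1 1 + M 2 2 - 3) = 0 := by
    linear_combination m00 + m11 + m22 - 2 * (-g00 - g11 - g22)
  rcases mul_eq_zero.mp this with h | h
  · left; linarith
  · right; linarith

theorem lie3_aux {V : Type*} [LieRing V] [LieAlgebra ℝ V] (b : Module.Basis (Fin 3) ℝ V)
    (p : Fin 3 → ℝ) (h0 : p 0 ≠ 0) (h1 : p 1 ≠ 0) (h2 : p 2 ≠ 0)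
    (b12 : ⁅b 1, b 2⁆ = p 0 • b 0) (b20 : ⁅b 2, b 0⁆ = p 1 • b 1)
    (b01 : ⁅b 0, b 1⁆ = p 2 • b 2) (τ : V →ₗ[ℝ] V)
    (hτ : ∀ x y, τ ⁅x, y⁆ = ⁅τ x, τ y⁆) (hinv : ∀ x, τ (τ x) = x) :
    LinearMap.trace ℝ V τ = -1 ∨ LinearMap.trace ℝ V τ = 3 := by
  rw [LinearMap.trace_eq_matrix_trace ℝ b]
  set M := LinearMap.toMatrix b b τ with hMdef
  have hcol : ∀ j, τ (b j) = M 0 j • b 0 + M 1 j • b 1 + M 2 j • b 2 := by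
    intro j
    have := (b.sum_repr (τ (b j))).symm
    rw [Fin.sum_univ_three] at this
    simpa only [hMdef, LinearMap.toMatrix_apply] using this
  have b21 : ⁅b 2, b 1⁆ = -(p 0 • b 0) := by rw [← lie_skew, b12]
  have b02 : ⁅b 0, b 2⁆ = -(p 1 • b 1) := by rw [← lie_skew, b20]
  have b10 : ⁅b 1, b 0⁆ = -(p 2 • b 2) := by rw [← lie_skew, b01]
  have key : ∀ i j k, ∀ c : ℝ, ⁅b i, b j⁆ = c • b k →
      (M 1 i * M 2 j - M 2 i * M 1 j) * p 0 = c * M 0 k ∧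
      (M 2 i * M 0 j - M 0 i * M 2 j) * p 1 = c * M 1 k ∧
      (M 0 i * M 1 j - M 1 i * M 0 j) * p 2 = c * M 2 k := by
    intro i j k c hb
    have e := hτ (b i) (b j)
    rw [hb, map_smul, hcol i, hcol j, hcol k] at e
    simp only [add_lie, lie_add, smul_lie, lie_smul, lie_self, b12, b20, b01, b21, b02, b10] at e
    have f := fun l => congrArg (fun v => b.repr v l) e
    have f0 := f 0
    have f1 := f 1
    have f2 := f 2
    simp [Finsupp.single_apply] at f0 f1 f2
    refine ⟨?_, ?_, ?_⟩ <;> linarith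
  apply mat3_aux M p h0 h1 h2
  · rw [hMdef, ← LinearMap.toMatrix_mul]
    have : τ * τ = 1 := by ext x; simp [hinv]
    rw [this, LinearMap.toMatrix_one]
  · obtain ⟨k00, k10, k20⟩ := key _ _ _ _ b12
    obtain ⟨k01, k11, k21⟩ := key _ _ _ _ b20
    obtain ⟨k02, k12, k22⟩ := key _ _ _ _ b01
    intro i j
    rw [Matrix.adjugate_fin_three]
    fin_cases i <;> fin_cases j <;> simp <;> linarith

theorem sl_lie_coe (x y : sl2R) : ((⁅x, y⁆ : sl2R) : Matrix (Fin 2) (Fin 2) ℝ)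
    = x.1 * y.1 - y.1 * x.1 := rfl

theorem so_lie_coe (x y : so3R) : ((⁅x, y⁆ : so3R) : Matrix (Fin 3) (Fin 3) ℝ)
    = x.1 * y.1 - y.1 * x.1 := rfl

theorem sl_tr (x : sl2R) : x.1 1 1 = - x.1 0 0 := by
  have : Matrix.trace x.1 = 0 := x.2
  rw [Matrix.trace_fin_two] at this
  linarith

theorem so_sk (x : so3R) (i j : Fin 3) : x.1 i j = - x.1 j i := by
  have := (LieAlgebra.Orthogonal.mem_so (R := ℝ) _ _).mp x.2
  have := congrFun (congrFun this j) i
  simpa using this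

noncomputable def slMk (v : Fin 3 → ℝ) : sl2R :=
  ⟨!![v 0, v 1 + v 2; v 1 - v 2, - v 0], by
    show Matrix.trace (!![v 0, v 1 + v 2; v 1 - v 2, - v 0] : Matrix (Fin 2) (Fin 2) ℝ) = 0
    rw [Matrix.trace_fin_two]; simp⟩

noncomputable def soMk (v : Fin 3 → ℝ) : so3R :=
  ⟨!![0, - v 2, v 1; v 2, 0, - v 0; - v 1, v 0, 0], by
    rw [LieAlgebra.Orthogonal.mem_so]
    ext i j; fin_cases i <;> fin_cases j <;> simp⟩

noncomputable def slEquiv : sl2R ≃ₗ[ℝ] (Fin 3 → ℝ) where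
  toFun x := ![x.1 0 0, (x.1 0 1 + x.1 1 0) / 2, (x.1 0 1 - x.1 1 0) / 2]
  invFun := slMk
  map_add' x y := by ext i; fin_cases i <;> simp <;> ring
  map_smul' c x := by ext i; fin_cases i <;> simp <;> ring
  left_inv x := by
    apply Subtype.ext
    ext i j; fin_cases i <;> fin_cases j <;> simp [slMk, sl_tr] <;> ring
  right_inv v := by ext i; fin_cases i <;> simp [slMk]

noncomputable def soEquiv : so3R ≃ₗ[ℝ] (Fin 3 → ℝ) where
  toFun x := ![x.1 2 1, x.1 0 2, x.1 1 0]
  invFun := soMk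
  map_add' x y := by ext i; fin_cases i <;> simp
  map_smul' c x := by ext i; fin_cases i <;> simp
  left_inv x := by
    apply Subtype.ext
    have a := so_sk x 0 0
    have b := so_sk x 1 1
    have c := so_sk x 2 2
    have d := so_sk x 0 1
    have e := so_sk x 1 2
    have f := so_sk x 2 0
    ext i j; fin_cases i <;> fin_cases j <;> simp [soMk] <;> linarith
  right_inv v := by ext i; fin_cases i <;> simp [soMk]

noncomputable def slB : Module.Basis (Fin 3) ℝ sl2R := Module.Basis.ofEquivFun slEquiv
noncomputable def soB : Module.Basis (Fin 3) ℝ so3R := Module.Basis.ofEquivFun soEquiv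

theorem slB_apply (i : Fin 3) : slB i = slMk (Pi.single i 1) := by
  simp [slB, slEquiv]
theorem soB_apply (i : Fin 3) : soB i = soMk (Pi.single i 1) := by
  simp [soB, soEquiv]

theorem sl_trace (τ : sl2R →ₗ[ℝ] sl2R)
    (hτ : ∀ x y, τ ⁅x, y⁆ = ⁅τ x, τ y⁆) (hinv : ∀ x, τ (τ x) = x) :
    LinearMap.trace ℝ sl2R τ = -1 ∨ LinearMap.trace ℝ sl2R τ = 3 := by
  apply lie3_aux slB ![-2, -2, 2] (by simp) (by simp) (by simp) _ _ _ τ hτ hinv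
  all_goals
    simp only [slB_apply]
    apply Subtype.ext
    rw [sl_lie_coe]
    ext i j; fin_cases i <;> fin_cases j <;> simp [slMk] <;> norm_num

theorem so_trace (τ : so3R →ₗ[ℝ] so3R)
    (hτ : ∀ x y, τ ⁅x, y⁆ = ⁅τ x, τ y⁆) (hinv : ∀ x, τ (τ x) = x) :
    LinearMap.trace ℝ so3R τ = -1 ∨ LinearMap.trace ℝ so3R τ = 3 := by
  apply lie3_aux soB ![1, 1, 1] (by simp) (by simp) (by simp) _ _ _ τ hτ hinv
  all_goals
    simp only [soB_apply]
    apply Subtype.ext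
    rw [so_lie_coe]
    ext i j; fin_cases i <;> fin_cases j <;> simp [soMk]

theorem so_no_eig (x y : so3R) (c : ℝ) (hc : c ≠ 0) (h : ⁅x, y⁆ = c • y) : y = 0 := by
  have h' := congrArg Subtype.val h
  rw [so_lie_coe] at h'
  have a := so_sk y 0 0
  have b := so_sk y 1 1
  have c' := so_sk y 2 2
  have d := so_sk y 0 1
  have e := so_sk y 1 2
  have f := so_sk y 2 0
  have a1 := so_sk x 0 0
  have b1 := so_sk x 1 1
  have c1 := so_sk x 2 2
  have d1 := so_sk x 0 1
  have e1 := so_sk x 1 2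
  have f1 := so_sk x 2 0
  have a : y.1 0 0 = 0 := by linarith
  have b : y.1 1 1 = 0 := by linarith
  have c' : y.1 2 2 = 0 := by linarith
  have a1 : x.1 0 0 = 0 := by linarith
  have b1 : x.1 1 1 = 0 := by linarith
  have c1 : x.1 2 2 = 0 := by linarith
  have p := congrFun (congrFun h' 1) 0
  have q := congrFun (congrFun h' 2) 1
  have r := congrFun (congrFun h' 0) 2
  simp [Matrix.mul_apply, Fin.sum_univ_three, a, b, c', a1, b1, c1, d, e, f, d1, e1, f1] at p q r
  have s : c * (y.1 1 0 ^ 2 + y.1 2 1 ^ 2 + y.1 0 2 ^ 2) = 0 := by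
    linear_combination -y.1 1 0 * p - y.1 2 1 * q - y.1 0 2 * r
  have s := (mul_eq_zero.mp s).resolve_left hc
  have s1 : y.1 1 0 = 0 := by
    apply pow_eq_zero_iff (two_ne_zero) |>.mp
    linarith [sq_nonneg (y.1 1 0), sq_nonneg (y.1 2 1), sq_nonneg (y.1 0 2)]
  have s2 : y.1 2 1 = 0 := by
    apply pow_eq_zero_iff (two_ne_zero) |>.mp
    linarith [sq_nonneg (y.1 1 0), sq_nonneg (y.1 2 1), sq_nonneg (y.1 0 2)]
  have s3 : y.1 0 2 = 0 := by
    apply pow_eq_zero_iff (two_ne_zero) |>.mp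
    linarith [sq_nonneg (y.1 1 0), sq_nonneg (y.1 2 1), sq_nonneg (y.1 0 2)]
  apply soEquiv.injective
  rw [map_zero]
  ext i; fin_cases i <;> simp [soEquiv, s1, s2, s3]

theorem hom_zero (φ : sl2R →ₗ[ℝ] so3R) (hφ : ∀ x y, φ ⁅x, y⁆ = ⁅φ x, φ y⁆) : φ = 0 := by
  have gen : ∀ u v : Fin 3 → ℝ, ∀ c : ℝ, c ≠ 0 → ⁅slMk u, slMk v⁆ = c • slMk v →
      φ (slMk v) = 0 := by
    intro u v c hc h
    apply so_no_eig (φ (slMk u)) _ c hc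
    rw [← hφ, h, map_smul]
  have e : φ (slMk ![0, 1, 1]) = 0 := by
    apply gen ![1, 0, 0] _ 2 (by norm_num)
    apply Subtype.ext
    rw [sl_lie_coe]
    ext i j; fin_cases i <;> fin_cases j <;> simp [slMk] <;> norm_num
  have f : φ (slMk ![0, 1, -1]) = 0 := by
    apply gen ![1, 0, 0] _ (-2) (by norm_num)
    apply Subtype.ext
    rw [sl_lie_coe]
    ext i j; fin_cases i <;> fin_cases j <;> simp [slMk] <;> norm_num
  have hh : φ (slMk ![4, 0, 0]) = 0 := by
    have : slMk ![4, 0, 0] = ⁅slMk ![0, 1, 1], slMk ![0, 1, -1]⁆ := by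
      apply Subtype.ext
      rw [sl_lie_coe]
      ext i j; fin_cases i <;> fin_cases j <;> simp [slMk] <;> norm_num
    rw [this, hφ, e, zero_lie]
  ext1 x
  have hx : x = (x.1 0 0 / 4) • slMk ![4, 0, 0] + (x.1 0 1 / 2) • slMk ![0, 1, 1]
      + (x.1 1 0 / 2) • slMk ![0, 1, -1] := by
    apply Subtype.ext
    ext i j; fin_cases i <;> fin_cases j <;> simp [slMk, sl_tr] <;> ring
  rw [hx]
  simp [e, f, hh]

theorem sl_center (x : sl2R) (h : ∀ y : sl2R, ⁅x, y⁆ = 0) : x = 0 := by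
  have p := congrArg Subtype.val (h (slMk ![1, 0, 0]))
  have q := congrArg Subtype.val (h (slMk ![0, 1, 1]))
  rw [sl_lie_coe] at p q
  have p1 := congrFun (congrFun p 0) 1
  have p2 := congrFun (congrFun p 1) 0
  have q1 := congrFun (congrFun q 0) 1
  have t := sl_tr x
  simp [slMk, Matrix.mul_apply, Matrix.vecMul, dotProduct, Fin.sum_univ_two] at p1 p2 q1
  apply Subtype.ext
  ext i j; fin_cases i <;> fin_cases j <;> simp <;> linarith

theorem prod_lie_def (x y : sl2R × so3R) : ⁅x, y⁆ = (⁅x.1, y.1⁆, ⁅x.2, y.2⁆) := rfl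

/-- no involutive Lie algebra automorphism of `sl₂(ℝ) × so₃(ℝ)` has a
3-dimensional fixed-point subalgebra. -/
theorem stmt_12 (σ : (sl2R × so3R) ≃ₗ⁅ℝ⁆ (sl2R × so3R))
    (hinv : ∀ x, σ (σ x) = x) :
    Module.finrank ℝ
      (LinearMap.ker (σ.toLieHom.toLinearMap - LinearMap.id)) ≠ 3 := by
  intro hfin
  set s : (sl2R × so3R) →ₗ[ℝ] (sl2R × so3R) := σ.toLieHom.toLinearMap with hs
  have sinv : ∀ x, s (s x) = x := hinv
  have slie : ∀ x y, s ⁅x, y⁆ = ⁅s x, s y⁆ := fun x y => LieEquiv.map_lie σ x y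
  have finsl : Module.Finite ℝ sl2R := Module.Finite.of_basis slB
  have finso : Module.Finite ℝ so3R := Module.Finite.of_basis soB
  have hφ : (LinearMap.snd ℝ sl2R so3R ∘ₗ s ∘ₗ LinearMap.inl ℝ sl2R so3R) = 0 := by
    apply hom_zero
    intro x y
    have := congrArg Prod.snd (slie (x, 0) (y, 0))
    simpa [prod_lie_def] using this
  have h1 : ∀ x, (s (x, 0)).2 = 0 := fun x => LinearMap.congr_fun hφ x
  have h2 : ∀ y, (s (0, y)).1 = 0 := by
    intro y
    apply sl_center
    intro z
    have e := slie (0, y) ((s (z, 0)).1, 0)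
    have e2 : (((s (z, 0)).1, 0) : sl2R × so3R) = s (z, 0) := by
      ext1
      · rfl
      · exact (h1 z).symm
    have e3 : ⁅((0, y) : sl2R × so3R), (((s (z, 0)).1, 0) : sl2R × so3R)⁆ = 0 := by
      rw [prod_lie_def]; simp
    rw [e3, map_zero, e2, sinv] at e
    exact (congrArg Prod.fst e).symm
  set s1 : sl2R →ₗ[ℝ] sl2R := LinearMap.fst ℝ sl2R so3R ∘ₗ s ∘ₗ LinearMap.inl ℝ sl2R so3R with hs1
  set s2 : so3R →ₗ[ℝ] so3R := LinearMap.snd ℝ sl2R so3R ∘ₗ s ∘ₗ LinearMap.inr ℝ sl2R so3R with hs2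
  have a1 : ∀ x, s (x, 0) = (s1 x, 0) := fun x => Prod.ext rfl (h1 x)
  have a2 : ∀ y, s (0, y) = (0, s2 y) := fun y => Prod.ext (h2 y) rfl
  have t1 := sl_trace s1 (by
      intro x y
      have := congrArg Prod.fst (slie (x, 0) (y, 0))
      simpa [prod_lie_def, a1] using this) (by
      intro x
      have := congrArg Prod.fst (sinv (x, 0))
      simpa [a1] using this)
  have t2 := so_trace s2 (by
      intro x y
      have := congrArg Prod.snd (slie (0, x) (0, y))
      simpa [prod_lie_def, a2] using this) (by
      intro x
      have := congrArg Prod.snd (sinv (0, x))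
      simpa [a2] using this)
  have hsp : s = LinearMap.prodMap s1 s2 := by
    ext1
    · ext1 x; simp [a1]
    · ext1 x; simp [a2]
  have ht : LinearMap.trace ℝ _ s = LinearMap.trace ℝ _ s1 + LinearMap.trace ℝ _ s2 := by
    rw [hsp]; exact LinearMap.trace_prodMap' s1 s2
  have hproj : LinearMap.IsProj (LinearMap.ker (s - LinearMap.id))
      ((1 / 2 : ℝ) • (s + LinearMap.id)) := by
    constructor
    · intro x
      rw [LinearMap.mem_ker]
      simp [sinv]
      abel
    · intro x hx
      rw [LinearMap.mem_ker] at hx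
      have : s x = x := sub_eq_zero.mp hx
      simp only [LinearMap.smul_apply, LinearMap.add_apply, this, LinearMap.id_apply]
      rw [← two_smul ℝ x, smul_smul]; norm_num
  have htr := hproj.trace
  rw [hfin, map_smul, map_add, LinearMap.trace_id, ht] at htr
  have d : Module.finrank ℝ (sl2R × so3R) = 6 := by
    rw [Module.finrank_prod, Module.finrank_eq_card_basis slB, Module.finrank_eq_card_basis soB]
    simp
  rw [d, smul_eq_mul] at htr
  push_cast at htr
  rcases t1 with t1 | t1 <;> rcases t2 with t2 | t2 <;> rw [t1, t2] at htr <;> norm_num at htr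
end

section
/- Let m be a real subspace of g with g = m ⊕ h (internal direct sum of real vector spaces). Then m satisfies ⁅⁅m, m⁆, m⁆ ⊆ m and m generates g as a Lie algebra if and only if there exist b₃, c₃, c₂ ∈ ℝ with b₃² + c₃² ≠ 1 such that m = span_ℝ{e₁ − c₃e₆ + b₃e₅, e₂ + c₂e₆ + b₃e₄, e₃ + c₂e₅ + c₃e₄}. -/
open Matrix

attribute [local instance 100] LieRing.ofAssociativeRing

/-- The 4×4 block matrix `blk(A, X) = [[A, X], [0, A]]`. -/
noncomputable def blk (A X : Matrix (Fin 2) (Fin 2) ℝ) : Matrix (Fin 4) (Fin 4) ℝ :=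
  Matrix.reindexAlgEquiv (R := ℝ) (A := ℝ) finSumFinEquiv (Matrix.fromBlocks A X 0 A)

lemma blk_add (A X B Y : Matrix (Fin 2) (Fin 2) ℝ) :
    blk A X + blk B Y = blk (A + B) (X + Y) := by
  simp only [blk, ← map_add, Matrix.fromBlocks_add, add_zero]

lemma blk_smul (c : ℝ) (A X : Matrix (Fin 2) (Fin 2) ℝ) :
    c • blk A X = blk (c • A) (c • X) := by
  rw [blk, blk, ← _root_.map_smul, Matrix.fromBlocks_smul, smul_zero]

lemma blk_neg (A X : Matrix (Fin 2) (Fin 2) ℝ) : -blk A X = blk (-A) (-X) := by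
  rw [← neg_one_smul ℝ (blk A X), blk_smul, neg_one_smul, neg_one_smul]

lemma blk_sub (A X B Y : Matrix (Fin 2) (Fin 2) ℝ) :
    blk A X - blk B Y = blk (A - B) (X - Y) := by
  rw [sub_eq_add_neg, blk_neg, blk_add, ← sub_eq_add_neg, ← sub_eq_add_neg]

lemma blk_zero : blk 0 0 = 0 := by
  simp [blk, Matrix.fromBlocks_zero]

lemma blk_mul (A X B Y : Matrix (Fin 2) (Fin 2) ℝ) :
    blk A X * blk B Y = blk (A * B) (A * Y + X * B) := by
  rw [blk, blk, blk, ← _root_.map_mul, Matrix.fromBlocks_multiply]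
  simp only [mul_zero, zero_mul, add_zero, zero_add]

/-- `g`: the Lie subalgebra of `gl₄(ℝ)` consisting of the block matrices `blk(A,X)` with
`A`, `X` traceless. -/
noncomputable def gLie : LieSubalgebra ℝ (Matrix (Fin 4) (Fin 4) ℝ) where
  carrier := {M | ∃ A X : Matrix (Fin 2) (Fin 2) ℝ, A.trace = 0 ∧ X.trace = 0 ∧ M = blk A X}
  add_mem' := by
    rintro M N ⟨A, X, hA, hX, rfl⟩ ⟨B, Y, hB, hY, rfl⟩
    exact ⟨A + B, X + Y, by simp [hA, hB], by simp [hX, hY], blk_add A X B Y⟩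
  zero_mem' := ⟨0, 0, Matrix.trace_zero (Fin 2) ℝ, Matrix.trace_zero (Fin 2) ℝ, blk_zero.symm⟩
  smul_mem' := by
    rintro c M ⟨A, X, hA, hX, rfl⟩
    exact ⟨c • A, c • X, by simp [hA], by simp [hX], blk_smul c A X⟩
  lie_mem' := by
    rintro M N ⟨A, X, hA, hX, rfl⟩ ⟨B, Y, hB, hY, rfl⟩
    refine ⟨A * B - B * A, (A * Y + X * B) - (B * X + Y * A), ?_, ?_, ?_⟩
    · simp [Matrix.trace_sub, Matrix.trace_mul_comm A B]
    · simp only [Matrix.trace_sub, Matrix.trace_add]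
      rw [Matrix.trace_mul_comm A Y, Matrix.trace_mul_comm X B]
      ring
    · show blk A X * blk B Y - blk B Y * blk A X = _
      rw [blk_mul, blk_mul, blk_sub]

/-- The matrix `H`. -/
def matH : Matrix (Fin 2) (Fin 2) ℝ := !![1, 0; 0, -1]

/-- The matrix `T`. -/
def matT : Matrix (Fin 2) (Fin 2) ℝ := !![0, 1; 1, 0]

/-- The matrix `U`. -/
def matU : Matrix (Fin 2) (Fin 2) ℝ := !![0, 1; -1, 0]

/-- `e₁ = blk(0, −U)`. -/
noncomputable def e₁ : Matrix (Fin 4) (Fin 4) ℝ := blk 0 (-matU)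

/-- `e₂ = blk(H, 0)`. -/
noncomputable def e₂ : Matrix (Fin 4) (Fin 4) ℝ := blk matH 0

/-- `e₃ = blk(T, 0)`. -/
noncomputable def e₃ : Matrix (Fin 4) (Fin 4) ℝ := blk matT 0

/-- `e₄ = blk(U, 0)`. -/
noncomputable def e₄ : Matrix (Fin 4) (Fin 4) ℝ := blk matU 0

/-- `e₅ = blk(0, −H)`. -/
noncomputable def e₅ : Matrix (Fin 4) (Fin 4) ℝ := blk 0 (-matH)

/-- `e₆ = blk(0, T)`. -/
noncomputable def e₆ : Matrix (Fin 4) (Fin 4) ℝ := blk 0 matT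

/-- `h = span_ℝ {e₄, e₅, e₆}`. -/
noncomputable def hSub : Submodule ℝ (Matrix (Fin 4) (Fin 4) ℝ) :=
  Submodule.span ℝ {e₄, e₅, e₆}


/-- coordinates on `g` -/
noncomputable def GG (p q r s t w : ℝ) : Matrix (Fin 4) (Fin 4) ℝ :=
  blk (p • matH + q • matT + r • matU) (s • matH + t • matT + w • matU)

lemma blk_inj {A X B Y : Matrix (Fin 2) (Fin 2) ℝ} (h : blk A X = blk B Y) : A = B ∧ X = Y := by
  have h' := (Matrix.reindexAlgEquiv (R := ℝ) (A := ℝ) finSumFinEquiv).injective h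
  rw [Matrix.fromBlocks_inj] at h'
  exact ⟨h'.1, h'.2.1⟩

lemma comb_eq (p q r : ℝ) : p • matH + q • matT + r • matU = !![p, q + r; q - r, -p] := by
  ext i j
  fin_cases i <;> fin_cases j <;> simp [matH, matT, matU, sub_eq_add_neg]

lemma comb_inj {p q r p' q' r' : ℝ}
    (h : p • matH + q • matT + r • matU = p' • matH + q' • matT + r' • matU) :
    p = p' ∧ q = q' ∧ r = r' := by
  rw [comb_eq, comb_eq] at h
  have h1 := congrFun (congrFun h 0) 0
  have h2 := congrFun (congrFun h 0) 1
  have h3 := congrFun (congrFun h 1) 0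
  simp at h1 h2 h3
  refine ⟨h1, ?_, ?_⟩ <;> linarith

lemma GG_inj {p q r s t w p' q' r' s' t' w' : ℝ}
    (h : GG p q r s t w = GG p' q' r' s' t' w') :
    p = p' ∧ q = q' ∧ r = r' ∧ s = s' ∧ t = t' ∧ w = w' := by
  obtain ⟨h1, h2⟩ := blk_inj h
  obtain ⟨a, b, c⟩ := comb_inj h1
  obtain ⟨d, e, f⟩ := comb_inj h2
  exact ⟨a, b, c, d, e, f⟩

lemma GG_congr {p q r s t w p' q' r' s' t' w' : ℝ} (h1 : p = p') (h2 : q = q') (h3 : r = r')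
    (h4 : s = s') (h5 : t = t') (h6 : w = w') :
    GG p q r s t w = GG p' q' r' s' t' w' := by
  subst h1 h2 h3 h4 h5 h6; rfl

lemma GG_add (p q r s t w p' q' r' s' t' w' : ℝ) :
    GG p q r s t w + GG p' q' r' s' t' w' =
      GG (p + p') (q + q') (r + r') (s + s') (t + t') (w + w') := by
  rw [GG, GG, GG, blk_add]
  congr 1 <;> module

lemma GG_sub (p q r s t w p' q' r' s' t' w' : ℝ) :
    GG p q r s t w - GG p' q' r' s' t' w' =
      GG (p - p') (q - q') (r - r') (s - s') (t - t') (w - w') := by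
  rw [GG, GG, GG, blk_sub]
  congr 1 <;> module

lemma GG_smul (k p q r s t w : ℝ) :
    k • GG p q r s t w = GG (k * p) (k * q) (k * r) (k * s) (k * t) (k * w) := by
  rw [GG, GG, blk_smul]
  congr 1 <;> module

lemma GG_zero : GG 0 0 0 0 0 0 = 0 := by
  simp [GG, blk_zero]

lemma GG_lie (p q r s t w p' q' r' s' t' w' : ℝ) :
    ⁅GG p q r s t w, GG p' q' r' s' t' w'⁆ =
      GG (-2 * (q * r' - r * q')) (2 * (p * r' - r * p')) (2 * (p * q' - q * p'))
        (-2 * (q * w' - r * t') - 2 * (t * r' - w * q'))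
        (2 * (p * w' - r * s') + 2 * (s * r' - w * p'))
        (2 * (p * t' - q * s') + 2 * (s * q' - t * p')) := by
  rw [LieRing.of_associative_ring_bracket]
  simp only [GG, comb_eq]
  rw [blk_mul, blk_mul, blk_sub]
  congr 1
  · ext i j
    fin_cases i <;> fin_cases j <;> simp <;> ring
  · ext i j
    fin_cases i <;> fin_cases j <;> simp <;> ring

lemma GG_mem (p q r s t w : ℝ) : GG p q r s t w ∈ gLie := by
  refine ⟨_, _, ?_, ?_, rfl⟩ <;> rw [comb_eq] <;> simp [Matrix.trace_fin_two]

lemma exists_GG {M : Matrix (Fin 4) (Fin 4) ℝ} (h : M ∈ gLie) :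
    ∃ p q r s t w, M = GG p q r s t w := by
  obtain ⟨A, X, hA, hX, rfl⟩ := h
  have key : ∀ B : Matrix (Fin 2) (Fin 2) ℝ, B.trace = 0 →
      ∃ p q r : ℝ, B = p • matH + q • matT + r • matU := by
    intro B hB
    refine ⟨B 0 0, (B 0 1 + B 1 0) / 2, (B 0 1 - B 1 0) / 2, ?_⟩
    rw [Matrix.trace_fin_two] at hB
    rw [comb_eq]
    ext i j
    fin_cases i <;> fin_cases j <;> simp <;> linarith
  obtain ⟨p, q, r, h1⟩ := key A hA
  obtain ⟨s, t, w, h2⟩ := key X hX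
  exact ⟨p, q, r, s, t, w, by rw [h1, h2]; rfl⟩

lemma e1_eq : e₁ = GG 0 0 0 0 0 (-1) := by simp [e₁, GG]
lemma e2_eq : e₂ = GG 1 0 0 0 0 0 := by simp [e₂, GG]
lemma e3_eq : e₃ = GG 0 1 0 0 0 0 := by simp [e₃, GG]
lemma e4_eq : e₄ = GG 0 0 1 0 0 0 := by simp [e₄, GG]
lemma e5_eq : e₅ = GG 0 0 0 (-1) 0 0 := by simp [e₅, GG]
lemma e6_eq : e₆ = GG 0 0 0 0 1 0 := by simp [e₆, GG]

lemma mem_hSub (x : Matrix (Fin 4) (Fin 4) ℝ) :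
    x ∈ hSub ↔ ∃ r s t : ℝ, x = GG 0 0 r s t 0 := by
  rw [hSub, Submodule.mem_span_triple]
  constructor
  · rintro ⟨a, b, c, rfl⟩
    refine ⟨a, -b, c, ?_⟩
    rw [e4_eq, e5_eq, e6_eq]
    simp only [GG_smul, GG_add]
    apply GG_congr <;> ring
  · rintro ⟨r, s, t, rfl⟩
    refine ⟨r, -s, t, ?_⟩
    rw [e4_eq, e5_eq, e6_eq]
    simp only [GG_smul, GG_add]
    apply GG_congr <;> ring

lemma mem_iff_of {m : Submodule ℝ (Matrix (Fin 4) (Fin 4) ℝ)} (hdisj : m ⊓ hSub = ⊥)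
    {x1 x2 x3 y1 y2 y3 z1 z2 z3 : ℝ} (h1 : GG 0 0 x1 x2 x3 (-1) ∈ m)
    (h2 : GG 1 0 y1 y2 y3 0 ∈ m) (h3 : GG 0 1 z1 z2 z3 0 ∈ m) (p q r s t w : ℝ) :
    GG p q r s t w ∈ m ↔ (r = -w * x1 + p * y1 + q * z1 ∧ s = -w * x2 + p * y2 + q * z2 ∧
      t = -w * x3 + p * y3 + q * z3) := by
  have hc : (-w) • GG 0 0 x1 x2 x3 (-1) + p • GG 1 0 y1 y2 y3 0 + q • GG 0 1 z1 z2 z3 0 ∈ m :=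
    m.add_mem (m.add_mem (m.smul_mem _ h1) (m.smul_mem _ h2)) (m.smul_mem _ h3)
  simp only [GG_smul, GG_add] at hc
  constructor
  · intro h
    have hd := m.sub_mem h hc
    rw [GG_sub] at hd
    have hh : _ ∈ m ⊓ hSub := ⟨hd, (mem_hSub _).2 ⟨r - (-w * x1 + p * y1 + q * z1),
      s - (-w * x2 + p * y2 + q * z2), t - (-w * x3 + p * y3 + q * z3), by
        apply GG_congr <;> ring⟩⟩
    rw [hdisj, Submodule.mem_bot, ← GG_zero] at hh
    obtain ⟨-, -, a, b, c, -⟩ := GG_inj hh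
    refine ⟨?_, ?_, ?_⟩ <;> linarith
  · rintro ⟨a, b, c⟩
    convert hc using 1
    apply GG_congr <;> linarith

lemma exists_basis {m : Submodule ℝ (Matrix (Fin 4) (Fin 4) ℝ)}
    (hsup : m ⊔ hSub = gLie.toSubmodule) (p q w : ℝ) : ∃ r s t, GG p q r s t w ∈ m := by
  have h : GG p q 0 0 0 w ∈ m ⊔ hSub := by rw [hsup]; exact GG_mem _ _ _ _ _ _
  obtain ⟨a, ha, b, hb, hab⟩ := Submodule.mem_sup.1 h
  obtain ⟨r, s, t, rfl⟩ := (mem_hSub b).1 hb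
  refine ⟨-r, -s, -t, ?_⟩
  have : a = GG p q (-r) (-s) (-t) w := by
    rw [eq_sub_of_add_eq hab, GG_sub]
    apply GG_congr <;> ring
  rwa [← this]

/-- case where `m` projects onto `sl₂`: then `m` is a subalgebra. -/
lemma graph_case {m : Submodule ℝ (Matrix (Fin 4) (Fin 4) ℝ)} (hm : m ≤ gLie.toSubmodule)
    (hT : ∀ x ∈ m, ∀ y ∈ m, ∀ z ∈ m, ⁅⁅x, y⁆, z⁆ ∈ m)
    {a1 a2 a3 b1 b2 b3 c1 c2 c3 : ℝ} (ha : GG 1 0 0 a1 a2 a3 ∈ m)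
    (hb : GG 0 1 0 b1 b2 b3 ∈ m) (hc : GG 0 0 1 c1 c2 c3 ∈ m)
    (hi : ∀ p q r s t w, GG p q r s t w ∈ m ↔ (s = p * a1 + q * b1 + r * c1 ∧
      t = p * a2 + q * b2 + r * c2 ∧ w = p * a3 + q * b3 + r * c3)) :
    ∀ x ∈ m, ∀ y ∈ m, ⁅x, y⁆ ∈ m := by
  have k1 := hT _ ha _ hb _ ha
  have k2 := hT _ ha _ hb _ hb
  have k3 := hT _ ha _ hb _ hc
  have k4 := hT _ ha _ hc _ ha
  have k5 := hT _ ha _ hc _ hb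
  have k6 := hT _ ha _ hc _ hc
  have k7 := hT _ hb _ hc _ ha
  have k8 := hT _ hb _ hc _ hb
  have k9 := hT _ hb _ hc _ hc
  simp only [GG_lie, hi] at k1 k2 k3 k4 k5 k6 k7 k8 k9
  have E1 : a1 = 0 := by linarith
  have E2 : b2 = 0 := by linarith
  have E3 : c3 = 0 := by linarith
  have E4 : b1 = - a2 := by linarith
  have E5 : c1 = a3 := by linarith
  have E6 : c2 = b3 := by linarith
  intro x hx y hy
  obtain ⟨p, q, r, s, t, w, rfl⟩ := exists_GG (hm hx)
  obtain ⟨p', q', r', s', t', w', rfl⟩ := exists_GG (hm hy)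
  rw [hi] at hx hy
  obtain ⟨rfl, rfl, rfl⟩ := hx
  obtain ⟨rfl, rfl, rfl⟩ := hy
  rw [GG_lie, hi]
  subst E1 E2 E3 E4 E5 E6
  refine ⟨?_, ?_, ?_⟩ <;> ring

lemma lieSpan_le_of {m n : Submodule ℝ (Matrix (Fin 4) (Fin 4) ℝ)} (hmn : m ≤ n)
    (hn : ∀ x ∈ n, ∀ y ∈ n, ⁅x, y⁆ ∈ n) {x : Matrix (Fin 4) (Fin 4) ℝ}
    (hx : x ∈ LieSubalgebra.lieSpan ℝ (Matrix (Fin 4) (Fin 4) ℝ) (m : Set _)) : x ∈ n := by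
  let K : LieSubalgebra ℝ (Matrix (Fin 4) (Fin 4) ℝ) :=
    { n with lie_mem' := fun {x y} hx hy => hn x hx y hy }
  have : LieSubalgebra.lieSpan ℝ (Matrix (Fin 4) (Fin 4) ℝ) (m : Set _) ≤ K :=
    LieSubalgebra.lieSpan_le.2 hmn
  exact this hx

/-- the subspace of `g` with `A` in a fixed plane -/
noncomputable def planeSub (b c : ℝ) : Submodule ℝ (Matrix (Fin 4) (Fin 4) ℝ) where
  carrier := {M | ∃ p q s t w : ℝ, M = GG p q (p * b + q * c) s t w}
  add_mem' := by
    rintro _ _ ⟨p, q, s, t, w, rfl⟩ ⟨p', q', s', t', w', rfl⟩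
    refine ⟨p + p', q + q', s + s', t + t', w + w', ?_⟩
    rw [GG_add]
    apply GG_congr <;> ring
  zero_mem' := ⟨0, 0, 0, 0, 0, by rw [← GG_zero]; apply GG_congr <;> ring⟩
  smul_mem' := by
    rintro k _ ⟨p, q, s, t, w, rfl⟩
    refine ⟨k * p, k * q, k * s, k * t, k * w, ?_⟩
    rw [GG_smul]
    apply GG_congr <;> ring

lemma planeSub_lie {b c : ℝ} (h : b ^ 2 + c ^ 2 = 1) :
    ∀ x ∈ planeSub b c, ∀ y ∈ planeSub b c, ⁅x, y⁆ ∈ planeSub b c := by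
  rintro _ ⟨p, q, s, t, w, rfl⟩ _ ⟨p', q', s', t', w', rfl⟩
  rw [GG_lie]
  refine ⟨_, _, _, _, _, GG_congr rfl rfl ?_ rfl rfl rfl⟩
  linear_combination (-2 * (p * q' - q * p')) * h

lemma e4_not_planeSub (b c : ℝ) : GG 0 0 1 0 0 0 ∉ planeSub b c := by
  rintro ⟨p, q, s, t, w, h⟩
  obtain ⟨rfl, rfl, h, -⟩ := GG_inj h
  simp at h

lemma e4_not_mem {m : Submodule ℝ (Matrix (Fin 4) (Fin 4) ℝ)} (hdisj : m ⊓ hSub = ⊥) :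
    GG 0 0 1 0 0 0 ∉ m := by
  intro h
  have hh : GG 0 0 1 0 0 0 ∈ m ⊓ hSub := ⟨h, (mem_hSub _).2 ⟨1, 0, 0, rfl⟩⟩
  rw [hdisj, Submodule.mem_bot, ← GG_zero] at hh
  obtain ⟨-, -, a, -⟩ := GG_inj hh
  norm_num at a

lemma gens_eq (b c d : ℝ) : e₁ - c • e₆ + b • e₅ = GG 0 0 0 (-b) (-c) (-1) ∧
    e₂ + d • e₆ + b • e₄ = GG 1 0 b 0 d 0 ∧ e₃ + d • e₅ + c • e₄ = GG 0 1 c (-d) 0 0 := by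
  simp only [e1_eq, e2_eq, e3_eq, e4_eq, e5_eq, e6_eq, GG_smul, GG_add, GG_sub]
  refine ⟨?_, ?_, ?_⟩ <;> apply GG_congr <;> ring

lemma backward {m : Submodule ℝ (Matrix (Fin 4) (Fin 4) ℝ)} (hdisj : m ⊓ hSub = ⊥)
    (hm : m ≤ gLie.toSubmodule) {b c d : ℝ} (hbc : b ^ 2 + c ^ 2 ≠ 1)
    (h1 : GG 0 0 0 (-b) (-c) (-1) ∈ m) (h2 : GG 1 0 b 0 d 0 ∈ m) (h3 : GG 0 1 c (-d) 0 0 ∈ m) :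
    (∀ x ∈ m, ∀ y ∈ m, ∀ z ∈ m, ⁅⁅x, y⁆, z⁆ ∈ m) ∧
      LieSubalgebra.lieSpan ℝ (Matrix (Fin 4) (Fin 4) ℝ) (m : Set _) = gLie := by
  have hi := mem_iff_of hdisj h1 h2 h3
  constructor
  · intro x hx y hy z hz
    obtain ⟨p, q, r, s, t, w, rfl⟩ := exists_GG (hm hx)
    obtain ⟨p', q', r', s', t', w', rfl⟩ := exists_GG (hm hy)
    obtain ⟨p'', q'', r'', s'', t'', w'', rfl⟩ := exists_GG (hm hz)
    rw [hi] at hx hy hz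
    obtain ⟨rfl, rfl, rfl⟩ := hx
    obtain ⟨rfl, rfl, rfl⟩ := hy
    obtain ⟨rfl, rfl, rfl⟩ := hz
    rw [GG_lie, GG_lie, hi]
    refine ⟨?_, ?_, ?_⟩ <;> ring
  · apply le_antisymm
    · exact LieSubalgebra.lieSpan_le.2 hm
    · set L := LieSubalgebra.lieSpan ℝ (Matrix (Fin 4) (Fin 4) ℝ) (m : Set _) with hL
      have hmL : ∀ x ∈ m, x ∈ L := fun x hx => LieSubalgebra.subset_lieSpan hx
      have hD : b ^ 2 + c ^ 2 - 1 ≠ 0 := sub_ne_zero.2 hbc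
      have k1 := hmL _ h1
      have k2 := hmL _ h2
      have k3 := hmL _ h3
      have l1 := L.lie_mem k2 k1
      have l2 := L.lie_mem k3 k1
      have l3 := L.lie_mem k2 k3
      rw [GG_lie] at l1 l2 l3
      have tT : GG 0 0 0 0 1 0 ∈ L := by
        have := L.smul_mem (b ^ 2 + c ^ 2 - 1)⁻¹
          (L.sub_mem (L.smul_mem (1 / 2) l1) (L.smul_mem c k1))
        simp only [GG_smul, GG_sub] at this
        convert this using 1
        apply GG_congr <;> field_simp <;> ring
      have tH : GG 0 0 0 1 0 0 ∈ L := by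
        have := L.smul_mem (-(b ^ 2 + c ^ 2 - 1)⁻¹)
          (L.add_mem (L.smul_mem (1 / 2) l2) (L.smul_mem b k1))
        simp only [GG_smul, GG_add] at this
        convert this using 1
        apply GG_congr <;> field_simp <;> ring
      have tU : GG 0 0 0 0 0 1 ∈ L := by
        have := L.add_mem (L.add_mem (L.smul_mem (-1) k1) (L.smul_mem (-b) tH)) (L.smul_mem (-c) tT)
        simp only [GG_smul, GG_add] at this
        convert this using 1
        apply GG_congr <;> ring
      have eps : ∀ s t w, GG 0 0 0 s t w ∈ L := by
        intro s t w
        have := L.add_mem (L.add_mem (L.smul_mem s tH) (L.smul_mem t tT)) (L.smul_mem w tU)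
        simp only [GG_smul, GG_add] at this
        convert this using 1
        apply GG_congr <;> ring
      have rU : GG 0 0 1 0 0 0 ∈ L := by
        have h4 := L.sub_mem (L.sub_mem (L.smul_mem (1 / 2) l3) (L.smul_mem b k2))
          (L.smul_mem c k3)
        have h5 := L.smul_mem (-(b ^ 2 + c ^ 2 - 1)⁻¹) h4
        simp only [GG_smul, GG_sub] at h5
        convert h5 using 1
        apply GG_congr <;> field_simp <;> ring
      intro x hx
      obtain ⟨p, q, r, s, t, w, rfl⟩ := exists_GG hx
      have := L.add_mem (L.add_mem (L.add_mem (L.smul_mem p k2) (L.smul_mem q k3))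
        (L.smul_mem (r - p * b - q * c) rU)) (eps (s + q * d) (t - p * d) w)
      simp only [GG_smul, GG_add] at this
      convert this using 1
      apply GG_congr <;> ring

/-- the algebraic heart -/
lemma plane_case {m : Submodule ℝ (Matrix (Fin 4) (Fin 4) ℝ)}
    (hT : ∀ x ∈ m, ∀ y ∈ m, ∀ z ∈ m, ⁅⁅x, y⁆, z⁆ ∈ m) {b c x2 x3 y2 y3 z2 z3 : ℝ}
    (h1 : GG 0 0 0 x2 x3 (-1) ∈ m)
    (h2 : GG 1 0 b y2 y3 0 ∈ m) (h3 : GG 0 1 c z2 z3 0 ∈ m) (hbc : b ^ 2 + c ^ 2 ≠ 1)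
    (hi : ∀ p q r s t w, GG p q r s t w ∈ m ↔ (r = -w * 0 + p * b + q * c ∧
      s = -w * x2 + p * y2 + q * z2 ∧ t = -w * x3 + p * y3 + q * z3)) :
    x2 = -b ∧ x3 = -c ∧ y2 = 0 ∧ z3 = 0 ∧ z2 = -y3 := by
  have k1 := hT _ h2 _ h3 _ h1
  have k2 := hT _ h2 _ h1 _ h2
  have k3 := hT _ h2 _ h1 _ h3
  have k4 := hT _ h3 _ h1 _ h2
  have k5 := hT _ h3 _ h1 _ h3
  have k6 := hT _ h2 _ h3 _ h2
  have k7 := hT _ h2 _ h3 _ h3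
  simp only [GG_lie, hi] at k1 k2 k3 k4 k5 k6 k7
  obtain ⟨-, a1, a2⟩ := k2
  obtain ⟨-, a3, a4⟩ := k3
  obtain ⟨-, a5, a6⟩ := k4
  obtain ⟨-, a7, a8⟩ := k5
  obtain ⟨-, a9, a10⟩ := k6
  obtain ⟨-, a11, a12⟩ := k7
  have key : ∀ u : ℝ, u * (1 + b * x2) = 0 → u * (b * x3) = 0 → u * (1 + c * x3) = 0 →
      u = 0 := by
    intro u q1 q2 q3
    by_contra hu
    have r1 := (mul_eq_zero.1 q1).resolve_left hu
    have r2 := (mul_eq_zero.1 q2).resolve_left hu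
    have r3 := (mul_eq_zero.1 q3).resolve_left hu
    rcases mul_eq_zero.1 r2 with r | r
    · rw [r] at r1; norm_num at r1
    · rw [r] at r3; norm_num at r3
  have hu : b + x2 = 0 := key _ (by linarith) (by linarith) (by linarith)
  have hv : c + x3 = 0 := key _ (by linarith) (by linarith) (by linarith)
  obtain rfl : x2 = -b := by linarith
  obtain rfl : x3 = -c := by linarith
  have hD : 1 - b ^ 2 - c ^ 2 ≠ 0 := fun h => hbc (by linarith)
  have E1 : (y3 + z2) * (1 - b ^ 2) + 2 * b * c * y2 = 0 := by linarith
  have E2 : b * c * (y3 + z2) + 2 * (1 - c ^ 2) * y2 = 0 := by linarith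
  have E3 : b * c * (y3 + z2) + 2 * (1 - b ^ 2) * z3 = 0 := by linarith
  have E4 : (y3 + z2) * (1 - c ^ 2) + 2 * b * c * z3 = 0 := by linarith
  have S0 : y3 + z2 = 0 := by
    apply (mul_eq_zero.1 (?_ : _ * (1 - b ^ 2 - c ^ 2) = 0)).resolve_right hD
    linear_combination (1 - c ^ 2) * E1 - b * c * E2
  have Y0 : y2 = 0 := by
    apply (mul_eq_zero.1 (?_ : _ * (1 - b ^ 2 - c ^ 2) = 0)).resolve_right hD
    linear_combination (1 - b ^ 2) / 2 * E2 - b * c / 2 * E1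
  have Z0 : z3 = 0 := by
    apply (mul_eq_zero.1 (?_ : _ * (1 - b ^ 2 - c ^ 2) = 0)).resolve_right hD
    linear_combination (1 - c ^ 2) / 2 * E3 - b * c / 2 * E4
  exact ⟨rfl, rfl, Y0, Z0, by linarith⟩

/-- for a real subspace `m` with `g = m ⊕ h`, `m` satisfies
`⁅⁅m, m⁆, m⁆ ⊆ m` and generates `g` as a Lie algebra if and only if
`m = span_ℝ {e₁ − c₃e₆ + b₃e₅, e₂ + c₂e₆ + b₃e₄, e₃ + c₂e₅ + c₃e₄}` for some `b₃, c₃, c₂`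
with `b₃² + c₃² ≠ 1`. -/
theorem stmt_15 (m : Submodule ℝ (Matrix (Fin 4) (Fin 4) ℝ))
    (hdisj : m ⊓ hSub = ⊥) (hsup : m ⊔ hSub = gLie.toSubmodule) :
    ((∀ x ∈ m, ∀ y ∈ m, ∀ z ∈ m, ⁅⁅x, y⁆, z⁆ ∈ m) ∧
      LieSubalgebra.lieSpan ℝ (Matrix (Fin 4) (Fin 4) ℝ) (m : Set _) = gLie)
    ↔ ∃ b₃ c₃ c₂ : ℝ, b₃ ^ 2 + c₃ ^ 2 ≠ 1 ∧
        m = Submodule.span ℝ {e₁ - c₃ • e₆ + b₃ • e₅, e₂ + c₂ • e₆ + b₃ • e₄,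
          e₃ + c₂ • e₅ + c₃ • e₄} := by
  have hm : m ≤ gLie.toSubmodule := hsup ▸ le_sup_left
  constructor
  · rintro ⟨hT, hgen⟩
    obtain ⟨x1, x2, x3, h1⟩ := exists_basis hsup 0 0 (-1)
    obtain ⟨y1, y2, y3, h2⟩ := exists_basis hsup 1 0 0
    obtain ⟨z1, z2, z3, h3⟩ := exists_basis hsup 0 1 0
    have hi := mem_iff_of hdisj h1 h2 h3
    have hU : GG 0 0 1 0 0 0 ∈
        LieSubalgebra.lieSpan ℝ (Matrix (Fin 4) (Fin 4) ℝ) (m : Set _) := by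
      rw [hgen]; exact GG_mem _ _ _ _ _ _
    by_cases hx1 : x1 = 0
    · subst hx1
      have hbc : y1 ^ 2 + z1 ^ 2 ≠ 1 := by
        intro hbc
        refine e4_not_planeSub y1 z1 (lieSpan_le_of ?_ (planeSub_lie hbc) hU)
        intro x hx
        obtain ⟨p, q, r, s, t, w, rfl⟩ := exists_GG (hm hx)
        rw [hi] at hx
        exact ⟨p, q, s, t, w, GG_congr rfl rfl (by rw [hx.1]; ring) rfl rfl rfl⟩
      obtain ⟨rfl, rfl, rfl, rfl, rfl⟩ := plane_case hT h1 h2 h3 hbc hi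
      refine ⟨y1, z1, y3, hbc, ?_⟩
      obtain ⟨g1, g2, g3⟩ := gens_eq y1 z1 y3
      rw [g1, g2, g3]
      apply le_antisymm
      · intro x hx
        obtain ⟨p, q, r, s, t, w, rfl⟩ := exists_GG (hm hx)
        rw [hi] at hx
        rw [Submodule.mem_span_triple]
        refine ⟨-w, p, q, ?_⟩
        obtain ⟨rfl, rfl, rfl⟩ := hx
        simp only [GG_smul, GG_add]
        apply GG_congr <;> ring
      · rw [Submodule.span_le]
        rintro x (rfl | rfl | rfl)
        · exact h1
        · exact h2
        · exact h3
    · exfalso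
      have hc := m.smul_mem x1⁻¹ h1
      have ha := m.sub_mem h2 (m.smul_mem y1 hc)
      have hb := m.sub_mem h3 (m.smul_mem z1 hc)
      simp only [GG_smul, GG_sub] at ha hb hc
      have hc' : GG 0 0 1 (x1⁻¹ * x2) (x1⁻¹ * x3) (x1⁻¹ * -1) ∈ m := by
        convert hc using 1
        apply GG_congr <;> field_simp <;> ring
      have ha' : GG 1 0 0 (y2 - y1 * (x1⁻¹ * x2)) (y3 - y1 * (x1⁻¹ * x3))
          (0 - y1 * (x1⁻¹ * -1)) ∈ m := by
        convert ha using 1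
        apply GG_congr <;> field_simp <;> ring
      have hb' : GG 0 1 0 (z2 - z1 * (x1⁻¹ * x2)) (z3 - z1 * (x1⁻¹ * x3))
          (0 - z1 * (x1⁻¹ * -1)) ∈ m := by
        convert hb using 1
        apply GG_congr <;> field_simp <;> ring
      refine e4_not_mem hdisj (lieSpan_le_of le_rfl (graph_case hm hT ha' hb' hc' ?_) hU)
      intro p q r s t w
      have hcomb := m.add_mem (m.add_mem (m.smul_mem p ha') (m.smul_mem q hb')) (m.smul_mem r hc')
      simp only [GG_smul, GG_add] at hcomb
      constructor
      · intro h
        have hd := m.sub_mem h hcomb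
        rw [GG_sub, hi] at hd
        obtain ⟨d1, d2, d3⟩ := hd
        have w0 : w - (p * (0 - y1 * (x1⁻¹ * -1)) + q * (0 - z1 * (x1⁻¹ * -1))
            + r * (x1⁻¹ * -1)) = 0 := by
          apply (mul_eq_zero.1 (?_ : _ * x1 = 0)).resolve_right hx1
          linear_combination d1
        rw [w0] at d2 d3
        refine ⟨?_, ?_, ?_⟩
        · linear_combination d2
        · linear_combination d3
        · linear_combination w0
      · rintro ⟨rfl, rfl, rfl⟩
        convert hcomb using 1
        apply GG_congr <;> ring
  · rintro ⟨b, c, d, hbc, hspan⟩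
    obtain ⟨g1, g2, g3⟩ := gens_eq b c d
    rw [g1, g2, g3] at hspan
    apply backward hdisj hm hbc (d := d)
    · rw [hspan]; exact Submodule.subset_span (by simp)
    · rw [hspan]; exact Submodule.subset_span (by simp)
    · rw [hspan]; exact Submodule.subset_span (by simp)
end

section
/- For b₃, c₃, c₂ ∈ ℝ let m = span_ℝ{e₁ − c₃e₆ + b₃e₅, e₂ + c₂e₆ + b₃e₄, e₃ + c₂e₅ + c₃e₄} ⊆ g. Then ⁅m, m⁆ = span_ℝ{d₁, d₂, d₃} where d₁ = (1−b₃²)e₆ − c₃e₁ − c₃b₃e₅, d₂ = (1−c₃²)e₅ + b₃e₁ − c₃b₃e₆, d₃ = e₄ + c₃e₃ + b₃e₂ + c₂c₃e₅ + b₃c₂e₆; the subspace span_ℝ{d₁, d₂} is a Lie ideal of the subalgebra ⁅m, m⁆; and trace(ad d₃ ∘ ad d₃) < 0 (the trace of the adjoint action on g) if and only if b₃² + c₃² < 1. -/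
open Matrix

attribute [local instance 100] LieRing.ofAssociativeRing

lemma blk_explicit (p q r s x y z w : ℝ) :
    blk !![p, q; r, s] !![x, y; z, w] =
      !![p, q, x, y; r, s, z, w; 0, 0, p, q; 0, 0, r, s] := by
  ext i j
  fin_cases i <;> fin_cases j <;> rfl

lemma e₁_explicit : e₁ = !![0,0,0,-1; 0,0,1,0; 0,0,0,0; 0,0,0,0] := by
  have h0 : (0 : Matrix (Fin 2) (Fin 2) ℝ) = !![0,0;0,0] := by
    ext i j; fin_cases i <;> fin_cases j <;> rfl
  have : -matU = !![0,-1;1,0] := by ext i j; fin_cases i <;> fin_cases j <;> simp [matU]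
  rw [e₁, this, h0, blk_explicit]

lemma e₂_explicit : e₂ = !![1,0,0,0; 0,-1,0,0; 0,0,1,0; 0,0,0,-1] := by
  have h0 : (0 : Matrix (Fin 2) (Fin 2) ℝ) = !![0,0;0,0] := by
    ext i j; fin_cases i <;> fin_cases j <;> rfl
  rw [e₂, matH, h0, blk_explicit]

lemma e₃_explicit : e₃ = !![0,1,0,0; 1,0,0,0; 0,0,0,1; 0,0,1,0] := by
  have h0 : (0 : Matrix (Fin 2) (Fin 2) ℝ) = !![0,0;0,0] := by
    ext i j; fin_cases i <;> fin_cases j <;> rfl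
  rw [e₃, matT, h0, blk_explicit]

lemma e₄_explicit : e₄ = !![0,1,0,0; -1,0,0,0; 0,0,0,1; 0,0,-1,0] := by
  have h0 : (0 : Matrix (Fin 2) (Fin 2) ℝ) = !![0,0;0,0] := by
    ext i j; fin_cases i <;> fin_cases j <;> rfl
  rw [e₄, matU, h0, blk_explicit]

lemma e₅_explicit : e₅ = !![0,0,-1,0; 0,0,0,1; 0,0,0,0; 0,0,0,0] := by
  have h0 : (0 : Matrix (Fin 2) (Fin 2) ℝ) = !![0,0;0,0] := by
    ext i j; fin_cases i <;> fin_cases j <;> rfl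
  have : -matH = !![-1,0;0,1] := by ext i j; fin_cases i <;> fin_cases j <;> simp [matH]
  rw [e₅, this, h0, blk_explicit]

lemma e₆_explicit : e₆ = !![0,0,0,1; 0,0,1,0; 0,0,0,0; 0,0,0,0] := by
  have h0 : (0 : Matrix (Fin 2) (Fin 2) ℝ) = !![0,0;0,0] := by
    ext i j; fin_cases i <;> fin_cases j <;> rfl
  rw [e₆, matT, h0, blk_explicit]

/-- general element of `g` -/
def gmat (v : Fin 6 → ℝ) : Matrix (Fin 4) (Fin 4) ℝ :=
  !![v 0, v 1, v 3, v 4; v 2, -v 0, v 5, -v 3; 0, 0, v 0, v 1; 0, 0, v 2, -v 0]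

lemma gmat_mem (v : Fin 6 → ℝ) : gmat v ∈ gLie := by
  refine ⟨!![v 0, v 1; v 2, -v 0], !![v 3, v 4; v 5, -v 3], ?_, ?_, ?_⟩
  · simp [Matrix.trace_fin_two]
  · simp [Matrix.trace_fin_two]
  · rw [blk_explicit]; rfl

/-- coordinates on `g` -/
def gcoord (M : Matrix (Fin 4) (Fin 4) ℝ) : Fin 6 → ℝ :=
  ![M 0 0, M 0 1, M 1 0, M 0 2, M 0 3, M 1 2]

lemma gmat_gcoord (M : Matrix (Fin 4) (Fin 4) ℝ) (hM : M ∈ gLie) : gmat (gcoord M) = M := by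
  obtain ⟨A, X, hA, hX, rfl⟩ := hM
  rw [Matrix.trace_fin_two] at hA hX
  have hA' : A 1 1 = - A 0 0 := by linarith
  have hX' : X 1 1 = - X 0 0 := by linarith
  have h : blk A X = blk !![A 0 0, A 0 1; A 1 0, -A 0 0] !![X 0 0, X 0 1; X 1 0, -X 0 0] := by
    congr 1
    · rw [← hA']; exact Matrix.eta_fin_two A
    · rw [← hX']; exact Matrix.eta_fin_two X
  rw [h, blk_explicit]
  rfl

/-- coordinate equivalence -/
noncomputable def gEquiv : gLie ≃ₗ[ℝ] (Fin 6 → ℝ) where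
  toFun x := gcoord (x : Matrix (Fin 4) (Fin 4) ℝ)
  invFun v := ⟨gmat v, gmat_mem v⟩
  map_add' x y := by ext i; fin_cases i <;> rfl
  map_smul' c x := by ext i; fin_cases i <;> rfl
  left_inv x := Subtype.ext (gmat_gcoord x.1 x.2)
  right_inv v := by ext i; fin_cases i <;> rfl

lemma killing_g (d : gLie) (v : Fin 6 → ℝ) (hd : (d : Matrix (Fin 4) (Fin 4) ℝ) = gmat v) :
    killingForm ℝ gLie d d = 16 * (v 0 ^ 2 + v 1 * v 2) := by
  rw [killingForm_apply_apply,
    LinearMap.trace_eq_matrix_trace ℝ (Module.Basis.ofEquivFun gEquiv), Matrix.trace]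
  have key : ∀ i, (LinearMap.toMatrix (Module.Basis.ofEquivFun gEquiv)
      (Module.Basis.ofEquivFun gEquiv)
      (LieAlgebra.ad ℝ gLie d ∘ₗ LieAlgebra.ad ℝ gLie d)).diag i =
      gcoord (gmat v * (gmat v * gmat (Pi.single i 1) - gmat (Pi.single i 1) * gmat v)
        - (gmat v * gmat (Pi.single i 1) - gmat (Pi.single i 1) * gmat v) * gmat v) i := by
    intro i
    rw [Matrix.diag_apply, LinearMap.toMatrix_apply, ← hd]
    simp only [Module.Basis.coe_ofEquivFun, Module.Basis.ofEquivFun_repr_apply]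
    rfl
  simp only [key, Fin.sum_univ_six]
  simp [gcoord, gmat]
  ring

set_option maxHeartbeats 4000000 in
lemma brackets (b c k : ℝ) (m₁ m₂ m₃ d₁ d₂ d₃ : Matrix (Fin 4) (Fin 4) ℝ)
    (h₁ : m₁ = e₁ - c • e₆ + b • e₅)
    (h₂ : m₂ = e₂ + k • e₆ + b • e₄)
    (h₃ : m₃ = e₃ + k • e₅ + c • e₄)
    (hd₁ : d₁ = (1 - b ^ 2) • e₆ - c • e₁ - (c * b) • e₅)
    (hd₂ : d₂ = (1 - c ^ 2) • e₅ + b • e₁ - (c * b) • e₆)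
    (hd₃ : d₃ = e₄ + c • e₃ + b • e₂ + (k * c) • e₅ + (b * k) • e₆) :
    ⁅m₁, m₂⁆ = (2 : ℝ) • d₁ ∧ ⁅m₁, m₃⁆ = (2 : ℝ) • d₂ ∧ ⁅m₂, m₃⁆ = (2 : ℝ) • d₃ ∧
    ⁅d₁, d₂⁆ = 0 ∧ ⁅d₃, d₁⁆ = (-2 * b * c) • d₁ + (-2 * (1 - b ^ 2)) • d₂ ∧
    ⁅d₃, d₂⁆ = (2 * (1 - c ^ 2)) • d₁ + (2 * b * c) • d₂ := by
  have E1 : m₁ = !![0,0,-b,-1-c;0,0,1-c,b;0,0,0,0;0,0,0,0] := by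
    rw [h₁, e₁_explicit, e₅_explicit, e₆_explicit]
    ext i j; fin_cases i <;> fin_cases j <;> simp
  have E2 : m₂ = !![1,b,0,k;-b,-1,k,0;0,0,1,b;0,0,-b,-1] := by
    rw [h₂, e₂_explicit, e₄_explicit, e₆_explicit]
    ext i j; fin_cases i <;> fin_cases j <;> simp
  have E3 : m₃ = !![0,1+c,-k,0;1-c,0,0,k;0,0,0,1+c;0,0,1-c,0] := by
    rw [h₃, e₃_explicit, e₄_explicit, e₅_explicit]
    ext i j; fin_cases i <;> fin_cases j <;> simp <;> ring
  have F1 : d₁ = !![0,0,c*b,1-b^2+c;0,0,1-b^2-c,-(c*b);0,0,0,0;0,0,0,0] := by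
    rw [hd₁, e₁_explicit, e₅_explicit, e₆_explicit]
    ext i j; fin_cases i <;> fin_cases j <;> simp
  have F2 : d₂ = !![0,0,-(1-c^2),-b-c*b;0,0,b-c*b,1-c^2;0,0,0,0;0,0,0,0] := by
    rw [hd₂, e₁_explicit, e₅_explicit, e₆_explicit]
    ext i j; fin_cases i <;> fin_cases j <;> simp
  have F3 : d₃ = !![b,1+c,-(k*c),b*k;-1+c,-b,b*k,k*c;0,0,b,1+c;0,0,-1+c,-b] := by
    rw [hd₃, e₂_explicit, e₃_explicit, e₄_explicit, e₅_explicit, e₆_explicit]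
    ext i j; fin_cases i <;> fin_cases j <;> simp
  simp only [LieRing.of_associative_ring_bracket]
  clear h₁ h₂ h₃ hd₁ hd₂ hd₃
  subst E1 E2 E3 F1 F2 F3
  refine ⟨?_, ?_, ?_, ?_, ?_, ?_⟩ <;>
  · rw [← Matrix.ext_iff]
    simp only [Fin.forall_fin_succ, Fin.forall_fin_zero, Matrix.sub_apply, Matrix.add_apply,
      Matrix.smul_apply, Matrix.zero_apply, Matrix.mul_apply, Fin.sum_univ_four, smul_eq_mul,
      Matrix.of_apply, Matrix.cons_val, Matrix.cons_val_zero, Matrix.cons_val_succ, Fin.succ_zero_eq_one, Fin.succ_one_eq_two, Fin.reduceSucc, Fin.isValue, and_true, forall_const,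
      IsEmpty.forall_iff]
    refine ⟨⟨?_, ?_, ?_, ?_⟩, ⟨?_, ?_, ?_, ?_⟩, ⟨?_, ?_, ?_, ?_⟩, ⟨?_, ?_, ?_, ?_⟩⟩ <;> ring

theorem stmt_16 (b₃ c₃ c₂ : ℝ)
    (m : Submodule ℝ (Matrix (Fin 4) (Fin 4) ℝ))
    (hm : m = Submodule.span ℝ {e₁ - c₃ • e₆ + b₃ • e₅, e₂ + c₂ • e₆ + b₃ • e₄,
      e₃ + c₂ • e₅ + c₃ • e₄})
    (d₁ d₂ : Matrix (Fin 4) (Fin 4) ℝ)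
    (hd₁ : d₁ = (1 - b₃ ^ 2) • e₆ - c₃ • e₁ - (c₃ * b₃) • e₅)
    (hd₂ : d₂ = (1 - c₃ ^ 2) • e₅ + b₃ • e₁ - (c₃ * b₃) • e₆)
    (d₃ : gLie)
    (hd₃ : (d₃ : Matrix (Fin 4) (Fin 4) ℝ) =
      e₄ + c₃ • e₃ + b₃ • e₂ + (c₂ * c₃) • e₅ + (b₃ * c₂) • e₆) :
    Submodule.span ℝ (Set.image2 (fun x y => ⁅x, y⁆) (m : Set (Matrix (Fin 4) (Fin 4) ℝ))
        (m : Set (Matrix (Fin 4) (Fin 4) ℝ))) =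
      Submodule.span ℝ {d₁, d₂, (d₃ : Matrix (Fin 4) (Fin 4) ℝ)} ∧
    (∀ x ∈ Submodule.span ℝ (Set.image2 (fun x y => ⁅x, y⁆)
        (m : Set (Matrix (Fin 4) (Fin 4) ℝ)) (m : Set (Matrix (Fin 4) (Fin 4) ℝ))),
      ∀ y ∈ Submodule.span ℝ {d₁, d₂}, ⁅x, y⁆ ∈ Submodule.span ℝ {d₁, d₂}) ∧
    (killingForm ℝ gLie d₃ d₃ < 0 ↔ b₃ ^ 2 + c₃ ^ 2 < 1) := by
  obtain ⟨B12, B13, B23, D12, D31, D32⟩ :=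
    brackets b₃ c₃ c₂ _ _ _ d₁ d₂ (d₃ : Matrix (Fin 4) (Fin 4) ℝ) rfl rfl rfl hd₁ hd₂ hd₃
  generalize hm₁ : e₁ - c₃ • e₆ + b₃ • e₅ = m₁ at *
  generalize hm₂ : e₂ + c₂ • e₆ + b₃ • e₄ = m₂ at *
  generalize hm₃ : e₃ + c₂ • e₅ + c₃ • e₄ = m₃ at *
  have B21 : ⁅m₂, m₁⁆ = (-2 : ℝ) • d₁ := by rw [← lie_skew, B12, neg_smul]
  have B31 : ⁅m₃, m₁⁆ = (-2 : ℝ) • d₂ := by rw [← lie_skew, B13, neg_smul]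
  have B32 : ⁅m₃, m₂⁆ = (-2 : ℝ) • (d₃ : Matrix (Fin 4) (Fin 4) ℝ) := by
    rw [← lie_skew, B23, neg_smul]
  have D21 : ⁅d₂, d₁⁆ = 0 := by rw [← lie_skew, D12, neg_zero]
  have hspan : Submodule.span ℝ (Set.image2 (fun x y => ⁅x, y⁆)
        (m : Set (Matrix (Fin 4) (Fin 4) ℝ)) (m : Set (Matrix (Fin 4) (Fin 4) ℝ))) =
      Submodule.span ℝ {d₁, d₂, (d₃ : Matrix (Fin 4) (Fin 4) ℝ)} := by
    apply le_antisymm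
    · rw [Submodule.span_le]
      rintro _ ⟨x, hx, y, hy, rfl⟩
      rw [SetLike.mem_coe, hm, Submodule.mem_span_triple] at hx hy
      obtain ⟨x₁, x₂, x₃, rfl⟩ := hx
      obtain ⟨y₁, y₂, y₃, rfl⟩ := hy
      rw [SetLike.mem_coe, Submodule.mem_span_triple]
      refine ⟨2 * (x₁ * y₂ - x₂ * y₁), 2 * (x₁ * y₃ - x₃ * y₁), 2 * (x₂ * y₃ - x₃ * y₂), ?_⟩
      simp only [add_lie, lie_add, smul_lie, lie_smul, lie_self, B12, B13, B23, B21, B31, B32]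
      module
    · rw [Submodule.span_le]
      have k₁ : m₁ ∈ m := by rw [hm]; exact Submodule.subset_span (by simp)
      have k₂ : m₂ ∈ m := by rw [hm]; exact Submodule.subset_span (by simp)
      have k₃ : m₃ ∈ m := by rw [hm]; exact Submodule.subset_span (by simp)
      have aux : ∀ x ∈ m, ∀ y ∈ m, ∀ d, ⁅x, y⁆ = (2 : ℝ) • d →
          d ∈ Submodule.span ℝ (Set.image2 (fun x y => ⁅x, y⁆)
            (m : Set (Matrix (Fin 4) (Fin 4) ℝ)) (m : Set (Matrix (Fin 4) (Fin 4) ℝ))) := by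
        intro x hx y hy d h
        have : d = (1 / 2 : ℝ) • ⁅x, y⁆ := by rw [h]; module
        rw [this]
        exact Submodule.smul_mem _ _ (Submodule.subset_span ⟨x, hx, y, hy, rfl⟩)
      rintro z (rfl | rfl | rfl)
      · exact aux _ k₁ _ k₂ _ B12
      · exact aux _ k₁ _ k₃ _ B13
      · exact aux _ k₂ _ k₃ _ B23
  refine ⟨hspan, ?_, ?_⟩
  · rw [hspan]
    intro x hx y hy
    rw [Submodule.mem_span_triple] at hx
    rw [Submodule.mem_span_pair] at hy
    obtain ⟨x₁, x₂, x₃, rfl⟩ := hx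
    obtain ⟨y₁, y₂, rfl⟩ := hy
    rw [Submodule.mem_span_pair]
    refine ⟨x₃ * (y₁ * (-2 * b₃ * c₃) + y₂ * (2 * (1 - c₃ ^ 2))),
      x₃ * (y₁ * (-2 * (1 - b₃ ^ 2)) + y₂ * (2 * b₃ * c₃)), ?_⟩
    simp only [add_lie, lie_add, smul_lie, lie_smul, lie_self, D12, D21, D31, D32]
    module
  · rw [killing_g d₃ ![b₃, 1 + c₃, -1 + c₃, -(c₂ * c₃), b₃ * c₂, b₃ * c₂]]
    · simp only [Matrix.cons_val]
      constructor <;> intro h <;> nlinarith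
    · rw [hd₃, e₂_explicit, e₃_explicit, e₄_explicit, e₅_explicit, e₆_explicit]
      ext i j; fin_cases i <;> fin_cases j <;> simp [gmat]
end

section
/- For all λ₁, …, λ₆ ∈ ℝ and x = λ₁e₁ + λ₂e₂ + λ₃e₃ + λ₄e₄ + λ₅e₅ + λ₆e₆ ∈ g, the Killing form of g satisfies trace(ad x ∘ ad x) = 16·(λ₂² + λ₃² − λ₄²), where the trace is that of the endomorphism ad x ∘ ad x of the 6-dimensional real vector space g. -/
open Matrix

attribute [local instance 100] LieRing.ofAssociativeRing

lemma blk_expl (a b c d p q r s : ℝ) : blk !![a, b; c, d] !![p, q; r, s] =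
    !![a, b, p, q; c, d, r, s; 0, 0, a, b; 0, 0, c, d] := by
  ext i j
  fin_cases i <;> fin_cases j <;> rfl

/-- Inverse coordinates. -/
noncomputable def ofV (v : Fin 6 → ℝ) : gLie :=
  ⟨blk !![v 0, v 1; v 2, -v 0] !![v 3, v 4; v 5, -v 3],
    ⟨_, _, by simp [Matrix.trace_fin_two], by simp [Matrix.trace_fin_two], rfl⟩⟩

/-- Coordinates. -/
noncomputable def coordE : gLie ≃ₗ[ℝ] (Fin 6 → ℝ) where
  toFun M := ![M.1 0 0, M.1 0 1, M.1 1 0, M.1 0 2, M.1 0 3, M.1 1 2]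
  map_add' M N := by ext i; fin_cases i <;> rfl
  map_smul' c M := by ext i; fin_cases i <;> rfl
  invFun := ofV
  left_inv := by
    rintro ⟨M, A, X, hA, hX, hM⟩
    apply Subtype.ext
    rw [Matrix.trace_fin_two] at hA hX
    have h1 : A 1 1 = - A 0 0 := by linarith
    have h2 : X 1 1 = - X 0 0 := by linarith
    rw [Matrix.eta_fin_two A, Matrix.eta_fin_two X, blk_expl, h1, h2] at hM
    simp [ofV, blk_expl, hM]
  right_inv v := by
    ext i
    fin_cases i <;> simp [ofV, blk_expl]

lemma ofV_val (v : Fin 6 → ℝ) : (ofV v : Matrix (Fin 4) (Fin 4) ℝ) =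
    !![v 0, v 1, v 3, v 4; v 2, -v 0, v 5, -v 3; 0, 0, v 0, v 1; 0, 0, v 2, -v 0] := by
  simp [ofV, blk_expl]

/-- for `x = λ₁e₁ + λ₂e₂ + λ₃e₃ + λ₄e₄ + λ₅e₅ + λ₆e₆ ∈ g`, the Killing form
of `g` satisfies `trace (ad x ∘ ad x) = 16·(λ₂² + λ₃² − λ₄²)`. -/
theorem stmt_17 (l₁ l₂ l₃ l₄ l₅ l₆ : ℝ) (x : gLie)
    (hx : (x : Matrix (Fin 4) (Fin 4) ℝ) =
      l₁ • e₁ + l₂ • e₂ + l₃ • e₃ + l₄ • e₄ + l₅ • e₅ + l₆ • e₆) :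
    killingForm ℝ gLie x x = 16 * (l₂ ^ 2 + l₃ ^ 2 - l₄ ^ 2) := by
  have hx' : (x : Matrix (Fin 4) (Fin 4) ℝ) =
      !![l₂, l₃ + l₄, -l₅, -l₁ + l₆; l₃ - l₄, -l₂, l₁ + l₆, l₅;
        0, 0, l₂, l₃ + l₄; 0, 0, l₃ - l₄, -l₂] := by
    rw [hx, ← blk_expl]
    simp only [e₁, e₂, e₃, e₄, e₅, e₆, blk_smul, blk_add]
    congr 1 <;> ext i j <;> fin_cases i <;> fin_cases j <;> simp [matH, matT, matU] <;> ring
  rw [killingForm_apply_apply, LinearMap.trace_eq_matrix_trace ℝ (Module.Basis.ofEquivFun coordE)]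
  have key : ∀ i, (LinearMap.toMatrix (Module.Basis.ofEquivFun coordE)
      (Module.Basis.ofEquivFun coordE) (LieAlgebra.ad ℝ gLie x ∘ₗ LieAlgebra.ad ℝ gLie x)) i i =
      coordE ⁅x, ⁅x, ofV (Pi.single i 1)⁆⁆ i := by
    intro i
    rw [LinearMap.toMatrix_apply, Module.Basis.coe_ofEquivFun]
    rfl
  have lie : ∀ y : gLie, (⁅x, ⁅x, y⁆⁆ : gLie).1 =
      x.1 * (x.1 * y.1 - y.1 * x.1) - (x.1 * y.1 - y.1 * x.1) * x.1 := fun y => rfl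
  simp only [Matrix.trace, Matrix.diag, key, Fin.sum_univ_six]
  simp only [coordE, LinearEquiv.coe_mk, LinearMap.coe_mk, AddHom.coe_mk, lie, hx', ofV_val]
  simp [Matrix.mul_apply, Fin.sum_univ_four, Pi.single_apply]
  ring
end

section
/- For d ∈ ℝ let m_d = span_ℝ{e₁ + d·e₅, e₂ + d·e₄, e₃} ⊆ g. Then ⁅h, m_d⁆ ⊆ m_d if and only if d = 0. -/
open Matrix

attribute [local instance 100] LieRing.ofAssociativeRing

/-- For `d ∈ ℝ`, the subspace `m_d = span_ℝ {e₁ + d·e₅, e₂ + d·e₄, e₃}` of `g`. -/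
noncomputable def mSub (d : ℝ) : Submodule ℝ (Matrix (Fin 4) (Fin 4) ℝ) :=
  Submodule.span ℝ {e₁ + d • e₅, e₂ + d • e₄, e₃}

lemma blk_lie (A X B Y : Matrix (Fin 2) (Fin 2) ℝ) :
    ⁅blk A X, blk B Y⁆ = blk (A * B - B * A) ((A * Y + X * B) - (B * X + Y * A)) := by
  rw [Ring.lie_def, blk_mul, blk_mul, blk_sub]

/-- `⁅h, m_d⁆ ⊆ m_d` if and only if `d = 0`. -/
theorem stmt_18 (d : ℝ) :
    (∀ x ∈ hSub, ∀ y ∈ mSub d, ⁅x, y⁆ ∈ mSub d) ↔ d = 0 := by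
  constructor
  · intro h
    have h1 := h e₅ (Submodule.subset_span (by simp)) e₃ (Submodule.subset_span (by simp))
    rw [mSub, Submodule.mem_span_triple] at h1
    obtain ⟨a, b, c, h1⟩ := h1
    simp only [e₁, e₂, e₃, e₄, e₅, blk_lie, blk_smul, blk_add] at h1
    have h2 := (blk_inj h1).2
    have h3 := congrFun (congrFun h2 0) 0
    have h4 := congrFun (congrFun h2 0) 1
    simp [matH, matT, matU] at h3 h4
    rcases h3 with h3 | h3
    · subst h3
      norm_num at h4
    · exact h3
  · rintro rfl x hx y hy
    rw [hSub, Submodule.mem_span_triple] at hx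
    rw [mSub, Submodule.mem_span_triple] at hy ⊢
    obtain ⟨a, b, c, rfl⟩ := hx
    obtain ⟨p, q, r, rfl⟩ := hy
    refine ⟨2 * b * r + 2 * c * q, 2 * a * r, -2 * a * q, ?_⟩
    simp only [e₁, e₂, e₃, e₄, e₅, e₆, blk_lie, blk_smul, blk_add]
    congr 1 <;> ext i j <;> fin_cases i <;> fin_cases j <;>
      simp [matH, matT, matU] <;> ring
end

section
/- Every 1-dimensional Lie subalgebra of the product Lie algebra sl₂(ℝ) × ℝ that contains no nonzero Lie ideal of sl₂(ℝ) × ℝ is mapped by some Lie algebra automorphism of sl₂(ℝ) × ℝ onto one of the six subalgebras span_ℝ{(Z, k)} with Z ∈ {H, T + U, U} and k ∈ {0, 1}. -/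
open Matrix

attribute [local instance 100] LieRing.ofAssociativeRing

/-- `T` as an element of `sl₂(ℝ)`. -/
def elT : sl2R :=
  ⟨!![0, 1; 1, 0], show (!![0, 1; 1, 0] : Matrix (Fin 2) (Fin 2) ℝ) ∈
      LinearMap.ker (Matrix.traceLinearMap (Fin 2) ℝ ℝ) from
    LinearMap.mem_ker.2 (by simp [Matrix.trace_fin_two])⟩

/-- `U` as an element of `sl₂(ℝ)`. -/
def elU : sl2R :=
  ⟨!![0, 1; -1, 0], show (!![0, 1; -1, 0] : Matrix (Fin 2) (Fin 2) ℝ) ∈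
      LinearMap.ker (Matrix.traceLinearMap (Fin 2) ℝ ℝ) from
    LinearMap.mem_ker.2 (by simp [Matrix.trace_fin_two])⟩

/-- `H` as an element of `sl₂(ℝ)`. -/
def elH : sl2R :=
  ⟨!![1, 0; 0, -1], show (!![1, 0; 0, -1] : Matrix (Fin 2) (Fin 2) ℝ) ∈
      LinearMap.ker (Matrix.traceLinearMap (Fin 2) ℝ ℝ) from
    LinearMap.mem_ker.2 (by simp [Matrix.trace_fin_two])⟩

theorem mem_sl_iff (A : Matrix (Fin 2) (Fin 2) ℝ) : A ∈ sl2R ↔ A.trace = 0 := by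
  exact LinearMap.mem_ker (f := Matrix.traceLinearMap (Fin 2) ℝ ℝ)

theorem conj_mem (P Q : Matrix (Fin 2) (Fin 2) ℝ) (h : Q * P = 1) (Y : sl2R) :
    P * Y.1 * Q ∈ sl2R := by
  rw [mem_sl_iff, Matrix.trace_mul_comm, ← Matrix.mul_assoc, h, Matrix.one_mul]
  exact (mem_sl_iff _).1 Y.2

theorem prod_lie (x y : sl2R × ℝ) : ⁅x, y⁆ = (⁅x.1, y.1⁆, ⁅x.2, y.2⁆) := rfl

noncomputable def conjEquiv (P Q : Matrix (Fin 2) (Fin 2) ℝ) (h : Q * P = 1) (h' : P * Q = 1)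
    (m : ℝ) (hm : m ≠ 0) : (sl2R × ℝ) ≃ₗ⁅ℝ⁆ (sl2R × ℝ) where
  toFun x := (⟨P * x.1.1 * Q, conj_mem P Q h x.1⟩, m * x.2)
  invFun x := (⟨Q * x.1.1 * P, conj_mem Q P h' x.1⟩, m⁻¹ * x.2)
  map_add' x y := by
    ext1
    · apply Subtype.ext
      simp [Matrix.mul_add, Matrix.add_mul]
    · simp [mul_add]
  map_smul' r x := by
    ext1
    · apply Subtype.ext
      simp
    · simp [mul_left_comm]
  map_lie' := by
    intro x y
    ext1
    · apply Subtype.ext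
      simp only [prod_lie, LieSubalgebra.coe_bracket, Ring.lie_def]
      have key : ∀ A B : Matrix (Fin 2) (Fin 2) ℝ, P * A * Q * (P * B * Q) = P * (A * B) * Q := by
        intro A B
        calc _ = P * A * (Q * P) * B * Q := by simp only [Matrix.mul_assoc]
          _ = _ := by rw [h]; simp only [Matrix.mul_assoc, Matrix.one_mul]
      rw [key, key, Matrix.mul_sub, Matrix.sub_mul]
    · simp [prod_lie, Ring.lie_def, mul_comm]
  left_inv x := by
    ext1
    · apply Subtype.ext
      calc _ = (Q * P) * x.1.1 * (Q * P) := by simp only [Matrix.mul_assoc]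
        _ = _ := by rw [h]; simp
    · simp [hm]
  right_inv x := by
    ext1
    · apply Subtype.ext
      calc _ = (P * Q) * x.1.1 * (P * Q) := by simp only [Matrix.mul_assoc]
        _ = _ := by rw [h']; simp
    · simp [hm]

/-- Real normal forms up to conjugation and scaling. -/
theorem normal_form (a b c : ℝ) (h0 : ¬ (a = 0 ∧ b = 0 ∧ c = 0)) :
    ∃ Z ∈ ({elH, elT + elU, elU} : Set sl2R), ∃ l : ℝ, l ≠ 0 ∧
      ∃ Q : Matrix (Fin 2) (Fin 2) ℝ, Q.det ≠ 0 ∧ !![a, b; c, -a] * Q = l • (Q * Z.1) := by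
  rcases lt_trichotomy (a ^ 2 + b * c) 0 with hd | hd | hd
  · have hc : c ≠ 0 := by rintro rfl; nlinarith [sq_nonneg a]
    obtain ⟨l, hl, hl2⟩ : ∃ l : ℝ, l ≠ 0 ∧ l ^ 2 = -(a ^ 2 + b * c) :=
      ⟨√(-(a ^ 2 + b * c)), (Real.sqrt_pos.2 (by linarith)).ne', Real.sq_sqrt (by linarith)⟩
    refine ⟨elU, by simp, l, hl, !![l, -a; 0, -c], ?_, ?_⟩
    · simp [Matrix.det_fin_two, hl, hc]
    · ext i j
      fin_cases i <;> fin_cases j <;>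
        simp [elU, Matrix.mul_apply, Fin.sum_univ_two] <;> linarith
  · by_cases hc : c = 0
    · subst hc
      have ha : a = 0 := by nlinarith
      subst ha
      have hb : b ≠ 0 := by simpa using h0
      refine ⟨elT + elU, by simp, 1, one_ne_zero, !![b / 2, 0; 0, 1], ?_, ?_⟩
      · simp [Matrix.det_fin_two, hb]
      · ext i j
        fin_cases i <;> fin_cases j <;>
          simp [elT, elU, Matrix.mul_apply, Fin.sum_univ_two] <;> linarith
    · refine ⟨elT + elU, by simp, 1, one_ne_zero, !![a / 2, 1; c / 2, 0], ?_, ?_⟩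
      · simp [Matrix.det_fin_two, hc]
      · ext i j
        fin_cases i <;> fin_cases j <;>
          simp [elT, elU, Matrix.mul_apply, Fin.sum_univ_two] <;> linarith
  · by_cases hc : c = 0
    · subst hc
      have ha : a ≠ 0 := by rintro rfl; simp at hd
      refine ⟨elH, by simp, a, ha, !![1, b; 0, -2 * a], ?_, ?_⟩
      · simp [Matrix.det_fin_two, ha]
      · ext i j
        fin_cases i <;> fin_cases j <;>
          simp [elH, Matrix.mul_apply, Fin.sum_univ_two] <;> linarith
    · obtain ⟨l, hl, hl2⟩ : ∃ l : ℝ, l ≠ 0 ∧ l ^ 2 = a ^ 2 + b * c :=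
        ⟨√(a ^ 2 + b * c), (Real.sqrt_pos.2 hd).ne', Real.sq_sqrt hd.le⟩
      refine ⟨elH, by simp, l, hl, !![a + l, a - l; c, c], ?_, ?_⟩
      · have : (!![a + l, a - l; c, c] : Matrix (Fin 2) (Fin 2) ℝ).det = 2 * l * c := by
          simp [Matrix.det_fin_two]; ring
        rw [this]; positivity
      · ext i j
        fin_cases i <;> fin_cases j <;>
          simp [elH, Matrix.mul_apply, Fin.sum_univ_two] <;> linarith

theorem stmt_19 (h : LieSubalgebra ℝ (sl2R × ℝ))
    (hdim : Module.finrank ℝ h = 1)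
    (hnoideal : ∀ I : LieIdeal ℝ (sl2R × ℝ),
      I.toSubmodule ≤ h.toSubmodule → I = ⊥) :
    ∃ φ : (sl2R × ℝ) ≃ₗ⁅ℝ⁆ (sl2R × ℝ),
      ∃ Z ∈ ({elH, elT + elU, elU} : Set sl2R), ∃ k ∈ ({0, 1} : Set ℝ),
        Submodule.map φ.toLieHom.toLinearMap h.toSubmodule =
          Submodule.span ℝ {(Z, k)} := by
  obtain ⟨v, hv0, hv⟩ : ∃ v : sl2R × ℝ, v ≠ 0 ∧ h.toSubmodule = Submodule.span ℝ {v} := by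
    obtain ⟨v, hv0, hv⟩ := finrank_eq_one_iff'.1 hdim
    refine ⟨v.1, fun e => hv0 (Subtype.ext e), le_antisymm ?_ ?_⟩
    · intro w hw
      obtain ⟨c, hc⟩ := hv ⟨w, hw⟩
      exact Submodule.mem_span_singleton.2 ⟨c, congrArg Subtype.val hc⟩
    · rw [Submodule.span_singleton_le_iff_mem]
      exact v.2
  obtain ⟨X, t⟩ := v
  have hX : X ≠ 0 := by
    rintro rfl
    let I : LieIdeal ℝ (sl2R × ℝ) :=
      { Submodule.span ℝ {((0 : sl2R), t)} with
        lie_mem := by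
          intro x m hm
          obtain ⟨c, rfl⟩ := Submodule.mem_span_singleton.1 hm
          have : ⁅x, c • ((0 : sl2R), t)⁆ = 0 := by
            rw [prod_lie]
            ext1
            · simp
            · simp [Ring.lie_def, mul_comm]
          rw [this]
          exact Submodule.zero_mem _ }
    have hI := hnoideal I hv.ge
    have : ((0 : sl2R), t) ∈ I := Submodule.mem_span_singleton_self _
    rw [hI] at this
    exact hv0 ((LieSubmodule.mem_bot _).1 this)
  have htr := (mem_sl_iff _).1 X.2
  rw [Matrix.trace_fin_two] at htr
  have hXe : X.1 = !![X.1 0 0, X.1 0 1; X.1 1 0, -X.1 0 0] := by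
    ext i j
    fin_cases i <;> fin_cases j <;> simp
    linarith
  obtain ⟨Z, hZ, l, hl, Q, hQ, hXQ⟩ := normal_form (X.1 0 0) (X.1 0 1) (X.1 1 0) (by
    rintro ⟨h1, h2, h3⟩
    apply hX
    apply Subtype.ext
    rw [hXe, h1, h2, h3]
    ext i j
    fin_cases i <;> fin_cases j <;> simp)
  rw [← hXe] at hXQ
  have hu : IsUnit Q.det := isUnit_iff_ne_zero.2 hQ
  have h1 : Q⁻¹ * X.1 * Q = l • Z.1 := by
    rw [Matrix.mul_assoc, hXQ, Matrix.mul_smul, ← Matrix.mul_assoc, Matrix.nonsing_inv_mul _ hu,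
      Matrix.one_mul]
  obtain ⟨k, hk, m, hm, hmt⟩ : ∃ k ∈ ({0, 1} : Set ℝ), ∃ m : ℝ, m ≠ 0 ∧ m * t = l * k := by
    by_cases ht : t = 0
    · exact ⟨0, by simp, 1, one_ne_zero, by simp [ht]⟩
    · exact ⟨1, by simp, l / t, div_ne_zero hl ht, by field_simp⟩
  refine ⟨conjEquiv Q⁻¹ Q (Matrix.mul_nonsing_inv _ hu) (Matrix.nonsing_inv_mul _ hu) m hm,
    Z, hZ, k, hk, ?_⟩
  rw [hv, Submodule.map_span, Set.image_singleton]
  have : (conjEquiv Q⁻¹ Q (Matrix.mul_nonsing_inv _ hu) (Matrix.nonsing_inv_mul _ hu) m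
      hm).toLieHom.toLinearMap (X, t) = l • (Z, k) := by
    ext1
    · exact Subtype.ext h1
    · exact hmt
  rw [this]
  exact Submodule.span_singleton_smul_eq (isUnit_iff_ne_zero.2 hl) _
end
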